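/- Random-index replacement lemma (second step of the proof of Proposition A.1). Let (X_{m,n})_{m,n≥1} be real random variables on a common probability space with uniformly bounded first moments: sup_{m,n} E[|X_{m,n}|] ≤ M < ∞. Let (k_n) be a sequence of positive integers with k_n → ∞, and let (T_n) be ℕ-valued random variables on the same space with T_n/k_n → 1 in probability. Then (1/k_n)·(Σ_{m=1}^{T_n} X_{m,n} − Σ_{m=1}^{k_n} X_{m,n}) → 0 in probability as n → ∞. -/

import Mathlib

open MeasureTheory ProbabilityTheory Filter Topology

/-!
Fix `δ > 0`. Unless `|T / k - 1| ≥ δ`, the sums up to `T` and up to `k` differ only by terms whose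
index is within `δ k` of `k`. There are at most `2 δ k` such indices, and they no longer depend on
`ω`, so Markov's inequality bounds the probability that these terms add up to at least `ε k` by
`2 δ M / ε`. Letting first `n → ∞` and then `δ → 0` gives the claim.
-/

open scoped ENNReal

/-- The indices within relative distance `δ` of `k`: the deterministic range containing every index
at which the sums up to `k` and up to some `j` with `|j / k - 1| < δ` can differ. The truncated
subtraction cuts the window off at `0` when `δ > 1`. -/
noncomputable def relWindow (k : ℕ) (δ : ℝ) : Finset ℕ :=
  Finset.Ico (k - ⌊δ * k⌋₊) (k + ⌊δ * k⌋₊)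

theorem card_relWindow_le (k : ℕ) {δ : ℝ} (hδ : 0 ≤ δ) :
    ((relWindow k δ).card : ℝ) ≤ 2 * δ * k := by
  have hcard : (relWindow k δ).card ≤ 2 * ⌊δ * k⌋₊ := by
    rw [relWindow, Nat.card_Ico]
    lia
  calc ((relWindow k δ).card : ℝ) ≤ 2 * (⌊δ * k⌋₊ : ℝ) := by exact_mod_cast hcard
    _ ≤ 2 * (δ * k) := by gcongr; exact Nat.floor_le (by positivity)
    _ = 2 * δ * k := by ring

theorem Ico_subset_relWindow {j k : ℕ} {δ : ℝ} (hk : 0 < k) (h : |(j : ℝ) / k - 1| < δ) :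
    Finset.Ico (min j k) (max j k) ⊆ relWindow k δ := by
  have hk' : (0 : ℝ) < k := by exact_mod_cast hk
  rw [div_sub_one hk'.ne', abs_div, abs_of_pos hk', div_lt_iff₀ hk', abs_lt] at h
  have hjk : j - k ≤ ⌊δ * k⌋₊ := by
    rw [tsub_le_iff_right, ← Nat.floor_add_natCast (by linarith)]
    exact Nat.le_floor (by linarith)
  have hkj : k - j ≤ ⌊δ * k⌋₊ := by
    rw [tsub_le_iff_right, ← Nat.floor_add_natCast (by linarith)]
    exact Nat.le_floor (by linarith)
  exact Finset.Ico_subset_Ico (by lia) (by lia)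

theorem norm_sum_range_sub_sum_range_le {E : Type*} [SeminormedAddCommGroup E]
    (f : ℕ → E) (j k : ℕ) :
    ‖∑ m ∈ Finset.range j, f m - ∑ m ∈ Finset.range k, f m‖
      ≤ ∑ m ∈ Finset.Ico (min j k) (max j k), ‖f m‖ := by
  wlog hkj : k ≤ j generalizing j k
  · rw [norm_sub_rev, min_comm, max_comm]
    exact this k j (le_of_not_ge hkj)
  rw [← Finset.sum_Ico_eq_sub f hkj, min_eq_right hkj, max_eq_left hkj]
  exact norm_sum_le _ _

theorem tendsto_zero_of_forall_eventually_le_add {ι κ : Type*} {l : Filter ι} {p : Filter κ}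
    [p.NeBot] {a : ι → ℝ≥0∞} {b : κ → ι → ℝ≥0∞} {c : κ → ℝ≥0∞}
    (hab : ∀ᶠ δ in p, ∀ᶠ i in l, a i ≤ b δ i + c δ)
    (hb : ∀ᶠ δ in p, Tendsto (b δ) l (𝓝 0)) (hc : Tendsto c p (𝓝 0)) :
    Tendsto a l (𝓝 0) := by
  rw [ENNReal.tendsto_nhds_zero]
  intro η hη
  have hη2 : 0 < η / 2 := ENNReal.half_pos hη.ne'
  obtain ⟨δ, habδ, hbδ, hcδ⟩ :=
    (hab.and (hb.and (ENNReal.tendsto_nhds_zero.1 hc _ hη2))).exists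
  filter_upwards [habδ, ENNReal.tendsto_nhds_zero.1 hbδ _ hη2] with i hi hbi
  calc a i ≤ b δ i + c δ := hi
    _ ≤ η / 2 + η / 2 := add_le_add hbi hcδ
    _ = η := ENNReal.add_halves η

section Measure

variable {Ω E : Type*} [MeasurableSpace Ω] {μ : Measure Ω} [NormedAddCommGroup E]

theorem measure_sum_norm_ge_le {κ : Type*} {s : Finset κ} {X : κ → Ω → E} {M r : ℝ}
    (hX : ∀ m ∈ s, Integrable (X m) μ) (hM : ∀ m ∈ s, ∫ ω, ‖X m ω‖ ∂μ ≤ M) (hr : 0 < r) :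
    μ {ω | r ≤ ∑ m ∈ s, ‖X m ω‖} ≤ ENNReal.ofReal (s.card * M / r) := by
  have hint : Integrable (fun ω => ∑ m ∈ s, ‖X m ω‖) μ :=
    integrable_finsetSum _ fun m hm => (hX m hm).norm
  have hmean : ∫ ω, ∑ m ∈ s, ‖X m ω‖ ∂μ ≤ s.card * M := by
    rw [integral_finsetSum _ fun m hm => (hX m hm).norm, ← nsmul_eq_mul]
    exact Finset.sum_le_card_nsmul _ _ _ hM
  have hmarkov := mul_meas_ge_le_integral_of_nonneg
    (ae_of_all μ fun ω => Finset.sum_nonneg fun m _ => norm_nonneg (X m ω)) hint r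
  rw [← ofReal_measureReal (hint.measure_ge_lt_top hr).ne]
  refine ENNReal.ofReal_le_ofReal ?_
  rw [le_div_iff₀' hr]
  exact hmarkov.trans hmean

variable [NormedSpace ℝ E]

theorem measure_norm_smul_sum_range_sub_ge_le {X : ℕ → Ω → E} {M δ ε : ℝ}
    (hX : ∀ m, Integrable (X m) μ) (hM : ∀ m, ∫ ω, ‖X m ω‖ ∂μ ≤ M)
    (k : ℕ) (T : Ω → ℕ) (hδ : 0 ≤ δ) (hε : 0 < ε) :
    μ {ω | ε ≤ ‖(k : ℝ)⁻¹ •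
        (∑ m ∈ Finset.range (T ω), X m ω - ∑ m ∈ Finset.range k, X m ω)‖}
      ≤ μ {ω | δ ≤ |(T ω : ℝ) / k - 1|} + ENNReal.ofReal (2 * δ * M / ε) := by
  rcases k.eq_zero_or_pos with rfl | hk
  · simp [hε.not_ge]
  have hk' : (0 : ℝ) < k := by exact_mod_cast hk
  have hM0 : 0 ≤ M := (integral_nonneg fun ω => norm_nonneg (X 0 ω)).trans (hM 0)
  have hsub : {ω | ε ≤ ‖(k : ℝ)⁻¹ •
        (∑ m ∈ Finset.range (T ω), X m ω - ∑ m ∈ Finset.range k, X m ω)‖}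
      ⊆ {ω | δ ≤ |(T ω : ℝ) / k - 1|} ∪ {ω | ε * k ≤ ∑ m ∈ relWindow k δ, ‖X m ω‖} := by
    intro ω hω
    refine or_iff_not_imp_left.2 fun hT => ?_
    rw [Set.mem_ofPred_eq, norm_smul, norm_inv, Real.norm_natCast, inv_mul_eq_div,
      le_div_iff₀ hk'] at hω
    calc ε * k
        ≤ ‖∑ m ∈ Finset.range (T ω), X m ω - ∑ m ∈ Finset.range k, X m ω‖ := hω
      _ ≤ ∑ m ∈ Finset.Ico (min (T ω) k) (max (T ω) k), ‖X m ω‖ :=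
        norm_sum_range_sub_sum_range_le (X · ω) _ _
      _ ≤ ∑ m ∈ relWindow k δ, ‖X m ω‖ :=
        Finset.sum_le_sum_of_subset_of_nonneg (Ico_subset_relWindow hk (not_le.1 hT))
          fun _ _ _ => norm_nonneg _
  have hwindow : (relWindow k δ).card * M / (ε * k) ≤ 2 * δ * M / ε :=
    calc (relWindow k δ).card * M / (ε * k) ≤ 2 * δ * k * M / (ε * k) := by
          gcongr
          exact card_relWindow_le k hδ
      _ = 2 * δ * M / ε := by field_simp
  refine (measure_mono hsub).trans <| (measure_union_le _ _).trans ?_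
  gcongr
  exact (measure_sum_norm_ge_le (fun m _ => hX m) (fun m _ => hM m) (by positivity)).trans
    (ENNReal.ofReal_le_ofReal hwindow)

theorem random_index_replacement_general {ι : Type*} {l : Filter ι} {Y : ℕ → ι → Ω → E} {M : ℝ}
    (hYint : ∀ m i, Integrable (Y m i) μ) (hM : ∀ m i, ∫ ω, ‖Y m i ω‖ ∂μ ≤ M)
    {k : ι → ℕ} {T : ι → Ω → ℕ}
    (hT : TendstoInMeasure μ (fun i ω => (T i ω : ℝ) / k i) l fun _ => 1) :
    TendstoInMeasure μ (fun i ω => (k i : ℝ)⁻¹ •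
      (∑ m ∈ Finset.range (T i ω), Y m i ω - ∑ m ∈ Finset.range (k i), Y m i ω)) l
      fun _ => 0 := by
  rw [tendstoInMeasure_iff_norm] at hT ⊢
  intro ε hε
  simp only [sub_zero]
  have hδ_pos : ∀ᶠ δ : ℝ in 𝓝[>] 0, 0 < δ := self_mem_nhdsWithin
  have hbound : Tendsto (fun δ : ℝ => ENNReal.ofReal (2 * δ * M / ε)) (𝓝[>] 0) (𝓝 0) := by
    have hcont : Continuous fun δ : ℝ => ENNReal.ofReal (2 * δ * M / ε) :=
      ENNReal.continuous_ofReal.comp (by fun_prop)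
    exact tendsto_nhdsWithin_of_tendsto_nhds (by simpa using hcont.tendsto 0)
  refine tendsto_zero_of_forall_eventually_le_add ?_ (hδ_pos.mono hT) hbound
  filter_upwards [hδ_pos] with δ hδ
  exact .of_forall fun i =>
    measure_norm_smul_sum_range_sub_ge_le (hYint · i) (hM · i) (k i) (T i) hδ.le hε

end Measure

/-- **Second step of the proof of Proposition A.1: random-index replacement
lemma.**  If the array `Y m n` has uniformly bounded first moments
`𝔼[|Y m n|] ≤ M`, `k n → ∞`, and `T n / k n → 1` in probability (no independence
assumed anywhere), then
`(1/kₙ) (∑_{m < Tₙ} Y m n − ∑_{m < kₙ} Y m n) → 0` in probability. -/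
theorem random_index_replacement
    {Ω : Type*} [MeasurableSpace Ω] (P : Measure Ω) [IsProbabilityMeasure P]
    (Y : ℕ → ℕ → Ω → ℝ)
    (hYint : ∀ m n, Integrable (Y m n) P)
    (M : ℝ) (hM : ∀ m n, ∫ ω, |Y m n ω| ∂P ≤ M)
    (k : ℕ → ℕ) (hk : Tendsto k atTop atTop)
    (T : ℕ → Ω → ℕ) (hTmeas : ∀ n, Measurable (T n))
    (hT : TendstoInMeasure P (fun n ω => (T n ω : ℝ) / (k n : ℝ)) atTop
      (fun _ => (1 : ℝ))) :
    TendstoInMeasure P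
      (fun n ω => ((∑ m ∈ Finset.range (T n ω), Y m n ω)
          - ∑ m ∈ Finset.range (k n), Y m n ω) / (k n : ℝ)) atTop
      (fun _ => (0 : ℝ)) := by
  simpa only [smul_eq_mul, inv_mul_eq_div] using random_index_replacement_general hYint hM hT
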